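/- arXiv:2306.00999 — 8 statements merged into one kernel-verified Lean document; each statement's English description precedes it below -/
import Mathlib

section
/- Let d ≥ 2 and let X : Matrix ((Fin d) × (Fin d)) ((Fin d) × (Fin d)) ℂ satisfy X = X^R and X = X^Γ. Then the column of X indexed by (0,1) equals the column indexed by (1,0), i.e. X ((a,b),(0,1)) = X ((a,b),(1,0)) for all (a,b); in particular X does not have full rank and is not invertible. -/
/-! Writing `X ((a,b),(c,e))` as a function of four indices, the hypothesis `X = X^R` is invariance
under the transposition `b ↔ c`, and `X = X^Γ` is invariance under `b ↔ e`. These transpositions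
generate all permutations of `b, c, e`; in particular `(c e) = (b c)(b e)(b c)` leaves `X`
invariant, so the columns `(c,e)` and `(e,c)` agree. For distinct `c`, `e` this forces `det X = 0`,
hence `X` is singular and of deficient rank. -/

open Matrix

/-- Reshuffling: `X^R ((a,b),(c,e)) = X ((a,c),(b,e))`. -/
def reshuffle {n α : Type*} (X : Matrix (n × n) (n × n) α) : Matrix (n × n) (n × n) α :=
  fun p q => X (p.1, q.1) (p.2, q.2)

/-- Partial transpose: `X^Γ ((a,b),(c,e)) = X ((a,e),(c,b))`. -/
def ptrans {n α : Type*} (X : Matrix (n × n) (n × n) α) : Matrix (n × n) (n × n) α :=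
  fun p q => X (p.1, q.2) (q.1, p.2)

/-- If `X = X^R` and `X = X^Γ` then the column indexed by `(0,1)` coincides with the
column indexed by `(1,0)`; in particular `X` does not have full rank and is not invertible. -/
theorem strongly_dual_repeated_column (d : ℕ) (hd : 2 ≤ d)
    (X : Matrix (Fin d × Fin d) (Fin d × Fin d) ℂ)
    (hR : X = reshuffle X) (hG : X = ptrans X) :
    (∀ a b : Fin d,
        X (a, b) (⟨0, by omega⟩, ⟨1, by omega⟩) = X (a, b) (⟨1, by omega⟩, ⟨0, by omega⟩))
    ∧ X.rank < d * d ∧ ¬ IsUnit X := by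
  have hcol : ∀ a b c e : Fin d, X (a, b) (c, e) = X (a, b) (e, c) := by
    have h1 : ∀ a b c e : Fin d, X (a, b) (c, e) = X (a, c) (b, e) :=
      fun a b c e => congrFun (congrFun hR (a, b)) (c, e)
    have h2 : ∀ a b c e : Fin d, X (a, b) (c, e) = X (a, e) (c, b) :=
      fun a b c e => congrFun (congrFun hG (a, b)) (c, e)
    intro a b c e
    rw [h1, h2, h1]
  have hdet : X.det = 0 := by
    refine Matrix.det_zero_of_column_eq
      (i := ((⟨0, by omega⟩, ⟨1, by omega⟩) : Fin d × Fin d))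
      (j := (⟨1, by omega⟩, ⟨0, by omega⟩)) (by simp) ?_
    rintro ⟨a, b⟩
    exact hcol a b _ _
  have hunit : ¬ IsUnit X := by
    rw [Matrix.isUnit_iff_isUnit_det, hdet]
    exact not_isUnit_zero
  refine ⟨fun a b => hcol a b _ _, lt_of_le_of_ne ?_ fun h => hunit ?_, hunit⟩
  · simpa using X.rank_le_card_width
  -- Full rank forces the columns to be linearly independent.
  · rw [← Matrix.linearIndependent_cols_iff_isUnit, linearIndependent_iff_card_eq_finrank_span,
      Set.finrank, ← Matrix.rank_eq_finrank_span_cols, h]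
    simp
end

section
/- Let d ≥ 1, let H be a real Hadamard matrix of order d (all entries of H are ±1 and H ⬝ Hᵀ = d • 1), and let P : Matrix ((Fin d) × (Fin d)) ((Fin d) × (Fin d)) ℝ be a permutation matrix such that P^R and P^Γ are unitary (P^R ⬝ (P^R)ᵀ = 1 and P^Γ ⬝ (P^Γ)ᵀ = 1). Then the matrix Y = (H ⊗ H) ⬝ P (Kronecker product followed by matrix product) is a 2-unitary real Hadamard matrix of order d²: every entry of Y is ±1, Y ⬝ Yᵀ = d² • 1, Y^R ⬝ (Y^R)ᵀ = d² • 1, and Y^Γ ⬝ (Y^Γ)ᵀ = d² • 1. -/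
/-!
Both rearrangements turn the left factor `H ⊗ H` into local factors on the two sides:
`((H ⊗ H) P)^R = (H ⊗ 1) P^R (H ⊗ 1)ᵀ` and `((H ⊗ H) P)^Γ = (H ⊗ 1) P^Γ (1 ⊗ Hᵀ)`
(`reshuffle_kron_mul`, `ptrans_kron_mul`). Each outer factor `B` satisfies `B Bᵀ = d • 1`, because
`H Hᵀ = d • 1` also forces `Hᵀ H = d • 1`. Hence a unitary middle factor gives a product that is
unitary up to the scalar `d * d` (`sandwich`). The entries of `(H ⊗ H) P` are `±1` because right
multiplication by a permutation matrix only permutes columns.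
-/

open Matrix

/-- Kronecker product indexed by pairs: `(A ⊗ B)((a,b),(c,e)) = A a c * B b e`. -/
def kron {n α : Type*} [Mul α] (A B : Matrix n n α) : Matrix (n × n) (n × n) α :=
  fun p q => A p.1 q.1 * B p.2 q.2

open scoped Kronecker

lemma reshuffle_kron_mul {d : ℕ} (H : Matrix (Fin d) (Fin d) ℝ)
    (P : Matrix (Fin d × Fin d) (Fin d × Fin d) ℝ) :
    reshuffle (kron H H * P) = (H ⊗ₖ 1) * reshuffle P * (Hᵀ ⊗ₖ 1) := by
  ext ⟨a, b⟩ ⟨c, e⟩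
  simp only [reshuffle, kron, mul_apply, kroneckerMap_apply, Fintype.sum_prod_type, one_apply,
    transpose_apply, mul_ite, ite_mul, mul_one, mul_zero, zero_mul, Finset.sum_ite_eq,
    Finset.sum_ite_eq', Finset.mem_univ, if_true, Finset.sum_mul]
  rw [Finset.sum_comm]
  exact Finset.sum_congr rfl fun l _ => Finset.sum_congr rfl fun k _ => by ring

lemma ptrans_kron_mul {d : ℕ} (H : Matrix (Fin d) (Fin d) ℝ)
    (P : Matrix (Fin d × Fin d) (Fin d × Fin d) ℝ) :
    ptrans (kron H H * P) = (H ⊗ₖ 1) * ptrans P * (1 ⊗ₖ Hᵀ) := by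
  ext ⟨a, b⟩ ⟨c, e⟩
  simp only [ptrans, kron, mul_apply, kroneckerMap_apply, Fintype.sum_prod_type, one_apply,
    transpose_apply, mul_ite, ite_mul, mul_one, one_mul, mul_zero, zero_mul, Finset.sum_ite_eq,
    Finset.sum_ite_eq', Finset.mem_univ, if_true, Finset.sum_mul, Finset.sum_ite_irrel, Finset.sum_const_zero]
  rw [Finset.sum_comm]
  exact Finset.sum_congr rfl fun l _ => Finset.sum_congr rfl fun k _ => by ring

/-- Two-sided multiplication by scaled orthogonal matrices turns an orthogonal matrix into a scaled
orthogonal one. -/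
lemma sandwich {n : Type*} [Fintype n] [DecidableEq n] {A M B : Matrix n n ℝ} {a b : ℝ}
    (hA : A * Aᵀ = a • 1) (hM : M * Mᵀ = 1) (hB : B * Bᵀ = b • 1) :
    (A * M * B) * (A * M * B)ᵀ = (a * b) • 1 := by
  calc (A * M * B) * (A * M * B)ᵀ = A * (M * (B * Bᵀ) * Mᵀ) * Aᵀ := by
        simp only [transpose_mul, Matrix.mul_assoc]
    _ = (a * b) • 1 := by
        simp [hB, hM, hA, smul_smul, mul_comm]

lemma transpose_mul_self_of_hadamard {d : ℕ} (hd : 1 ≤ d) {H : Matrix (Fin d) (Fin d) ℝ}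
    (hH : H * Hᵀ = (d : ℝ) • 1) : Hᵀ * H = (d : ℝ) • 1 := by
  have hd0 : (d : ℝ) ≠ 0 := by positivity
  have h : H * ((d : ℝ)⁻¹ • Hᵀ) = 1 := by
    rw [Matrix.mul_smul, hH, smul_smul, inv_mul_cancel₀ hd0, one_smul]
  rw [mul_eq_one_comm, Matrix.smul_mul] at h
  rw [← h, smul_smul, mul_inv_cancel₀ hd0, one_smul]

lemma kronecker_mul_transpose {d : ℕ} {A B : Matrix (Fin d) (Fin d) ℝ} {a b : ℝ}
    (hA : A * Aᵀ = a • 1) (hB : B * Bᵀ = b • 1) :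
    (A ⊗ₖ B) * (A ⊗ₖ B)ᵀ = (a * b) • 1 := by
  rw [← kroneckerMap_transpose, ← mul_kronecker_mul, hA, hB, smul_kronecker, kronecker_smul,
    one_kronecker_one, smul_smul]

/-- If `H` is a real Hadamard matrix of order `d` and `P` is a permutation matrix of order
`d²` whose reshuffle and partial transpose are unitary, then `(H ⊗ H) * P` is a
2-unitary real Hadamard matrix of order `d²`. -/
theorem hadamard_tensor_perm_two_unitary (d : ℕ) (hd : 1 ≤ d)
    (H : Matrix (Fin d) (Fin d) ℝ)
    (hHpm : ∀ i j, H i j = 1 ∨ H i j = -1)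
    (hH : H * Hᵀ = (d : ℝ) • 1)
    (P : Matrix (Fin d × Fin d) (Fin d × Fin d) ℝ)
    (hP : ∃ σ : Equiv.Perm (Fin d × Fin d), ∀ i j, P i j = if i = σ j then 1 else 0)
    (hPR : reshuffle P * (reshuffle P)ᵀ = 1)
    (hPG : ptrans P * (ptrans P)ᵀ = 1) :
    let Y := kron H H * P
    (∀ i j, Y i j = 1 ∨ Y i j = -1)
    ∧ Y * Yᵀ = ((d : ℝ) ^ 2) • 1
    ∧ reshuffle Y * (reshuffle Y)ᵀ = ((d : ℝ) ^ 2) • 1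
    ∧ ptrans Y * (ptrans Y)ᵀ = ((d : ℝ) ^ 2) • 1 := by
  intro Y
  obtain ⟨σ, hσ⟩ := hP
  have hPP : P * Pᵀ = 1 := by
    ext i j
    simp only [mul_apply, transpose_apply, hσ, one_apply]
    rw [Equiv.sum_comp σ fun k => (if i = k then (1 : ℝ) else 0) * if j = k then 1 else 0]
    simp
  have hone : (1 : Matrix (Fin d) (Fin d) ℝ) * 1ᵀ = (1 : ℝ) • 1 := by simp
  have hHt : Hᵀ * Hᵀᵀ = (d : ℝ) • 1 := by
    rw [transpose_transpose]
    exact transpose_mul_self_of_hadamard hd hH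
  have hH1 := kronecker_mul_transpose hH hone
  refine ⟨fun i j => ?_, ?_, ?_, ?_⟩
  · have hY : Y i j = H i.1 (σ j).1 * H i.2 (σ j).2 := by
      simp [Y, mul_apply, hσ, kron]
    rw [hY]
    rcases hHpm i.1 (σ j).1 with h1 | h1 <;> rcases hHpm i.2 (σ j).2 with h2 | h2 <;>
      simp [h1, h2]
  · have h := sandwich (B := 1) (b := 1) (kronecker_mul_transpose hH hH) hPP (by simp)
    rw [Matrix.mul_one, mul_one, ← sq] at h
    exact h
  · have h := sandwich hH1 hPR (kronecker_mul_transpose hHt hone)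
    rw [← reshuffle_kron_mul, mul_one, ← sq] at h
    exact h
  · have h := sandwich hH1 hPG (kronecker_mul_transpose hone hHt)
    rw [← ptrans_kron_mul, mul_one, one_mul, ← sq] at h
    exact h
end

section
/- Reshuffling intertwines local multiplication as follows: for any d ≥ 1, any matrices A, B, C, D : Matrix (Fin d) (Fin d) ℂ and any X : Matrix ((Fin d) × (Fin d)) ((Fin d) × (Fin d)) ℂ, one has ((A ⊗ B) ⬝ X ⬝ (C ⊗ D))^R = (A ⊗ Cᵀ) ⬝ X^R ⬝ (Bᵀ ⊗ D). -/
open Matrix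

/-- Reshuffling intertwines local multiplication:
`((A ⊗ B) X (C ⊗ D))^R = (A ⊗ Cᵀ) X^R (Bᵀ ⊗ D)`. -/
theorem reshuffle_local_mul (d : ℕ) (hd : 1 ≤ d)
    (A B C D : Matrix (Fin d) (Fin d) ℂ)
    (X : Matrix (Fin d × Fin d) (Fin d × Fin d) ℂ) :
    reshuffle (kron A B * X * kron C D) = kron A Cᵀ * reshuffle X * kron Bᵀ D := by
  ext ⟨a, b⟩ ⟨c, e⟩
  simp only [reshuffle, kron, Matrix.mul_apply, Matrix.transpose_apply, Fintype.sum_prod_type,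
    Finset.sum_mul]
  -- Both sides sum `A a i * B c j * X (i, j) (k, l) * C k b * D l e`: the left in the order
  -- `k, l, i, j`, the right in the order `j, l, i, k`.
  calc
    _ = ∑ l, ∑ i, ∑ k, ∑ j, A a i * B c j * X (i, j) (k, l) * (C k b * D l e) :=
      Finset.sum_comm.trans <| Finset.sum_congr rfl fun l _ => Finset.sum_comm
    _ = ∑ l, ∑ j, ∑ i, ∑ k, A a i * B c j * X (i, j) (k, l) * (C k b * D l e) :=
      Finset.sum_congr rfl fun l _ =>
        (Finset.sum_congr rfl fun i _ => Finset.sum_comm).trans Finset.sum_comm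
    _ = _ := by
      refine Finset.sum_comm.trans <| Finset.sum_congr rfl fun j _ =>
        Finset.sum_congr rfl fun l _ => Finset.sum_congr rfl fun i _ =>
        Finset.sum_congr rfl fun k _ => ?_
      ring
end

section
/- The permutation matrix P₉ of order 9 given (in 1-based flat indexing j = 3a + b + 1 for the pair (a,b) ∈ Fin 3 × Fin 3) by the column-to-row assignment σ = [1, 9, 5, 6, 2, 7, 8, 4, 3] (i.e. (P₉) j k = 1 if j = σ(k) and 0 otherwise) is 2-unitary: P₉ ⬝ P₉ᵀ = 1, P₉^R ⬝ (P₉^R)ᵀ = 1 and P₉^Γ ⬝ (P₉^Γ)ᵀ = 1. -/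
/-!
Read modulo 3, the permutation `σ` is the linear map `(k₁, k₂) ↦ (k₁ - k₂, -k₁ - k₂)`, so the
nonzero entries of `P₉` sit at the points of a two-dimensional linear subspace of `(ℤ/3)⁴`. This
subspace is an MDS code (equivalently, a pair of orthogonal Latin squares of order 3): any two
coordinates determine the other two. Reshuffling and partial transposition only permute the four
coordinates, so all three matrices are permutation matrices, hence orthogonal. Explicitly, the `1`
in row `(a, b)` is in column `(b - a, a + b)` for `P₉`, and in column `(a + b, b - a)` for both
`P₉^R` and `P₉^Γ`.
-/

open Matrix

/-- Flattening of `Fin 3 × Fin 3` to `Fin 9`, `(a,b) ↦ 3a + b`. -/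
def flat3 (p : Fin 3 × Fin 3) : Fin 9 :=
  ⟨3 * p.1.val + p.2.val, by have h1 := p.1.isLt; have h2 := p.2.isLt; omega⟩

/-- The column-to-row assignment of `P₉` in 1-based flat indexing. -/
def sigma9 : Fin 9 → ℕ := ![1, 9, 5, 6, 2, 7, 8, 4, 3]

/-- The permutation matrix `P₉`: `(P₉) j k = 1` iff `j = σ(k)` (1-based flat indices). -/
def P9 : Matrix (Fin 3 × Fin 3) (Fin 3 × Fin 3) ℝ :=
  fun p q => if (flat3 p).val + 1 = sigma9 (flat3 q) then 1 else 0

/-- A 0-1 matrix whose row `p` has its only `1` in column `f p`, with `f` injective, has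
orthonormal rows. -/
theorem mul_transpose_eq_one_of_graph {m : Type*} [Fintype m] [DecidableEq m]
    (r : m → m → Prop) [∀ p q, Decidable (r p q)] (f : m → m) (hf : Function.Injective f)
    (hr : ∀ p q, r p q ↔ q = f p) (X : Matrix m m ℝ)
    (hX : ∀ p q, X p q = if r p q then 1 else 0) : X * Xᵀ = 1 := by
  ext p p'
  simp [Matrix.mul_apply, hX, hr, Matrix.one_apply, hf.eq_iff, eq_comm]

/-- The permutation matrix `P₉` given by `σ = [1,9,5,6,2,7,8,4,3]` is 2-unitary. -/
theorem P9_two_unitary :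
    P9 * P9ᵀ = 1
    ∧ reshuffle P9 * (reshuffle P9)ᵀ = 1
    ∧ ptrans P9 * (ptrans P9)ᵀ = 1 := by
  refine ⟨?_, ?_, ?_⟩
  · exact mul_transpose_eq_one_of_graph
      (fun p q => (flat3 p).val + 1 = sigma9 (flat3 q))
      (fun p => (p.2 - p.1, p.1 + p.2)) (by decide) (by decide) _ (fun _ _ => rfl)
  · exact mul_transpose_eq_one_of_graph
      (fun p q => (flat3 (p.1, q.1)).val + 1 = sigma9 (flat3 (p.2, q.2)))
      (fun p => (p.1 + p.2, p.2 - p.1)) (by decide) (by decide) _ (fun _ _ => rfl)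
  · exact mul_transpose_eq_one_of_graph
      (fun p q => (flat3 (p.1, q.2)).val + 1 = sigma9 (flat3 (q.1, p.2)))
      (fun p => (p.1 + p.2, p.2 - p.1)) (by decide) (by decide) _ (fun _ _ => rfl)
end

section
/- The permutation matrix P₁₆ of order 16 given (in 1-based flat indexing j = 4a + b + 1 for the pair (a,b) ∈ Fin 4 × Fin 4) by the column-to-row assignment σ = [1, 16, 6, 11, 15, 2, 12, 5, 8, 9, 3, 14, 10, 7, 13, 4] (i.e. (P₁₆) j k = 1 if j = σ(k) and 0 otherwise) is 2-unitary: P₁₆ ⬝ P₁₆ᵀ = 1, P₁₆^R ⬝ (P₁₆^R)ᵀ = 1 and P₁₆^Γ ⬝ (P₁₆^Γ)ᵀ = 1. -/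
/-!
Reshuffling and partial transposition only permute the entries of `P16`, so all three matrices have
entries in `{0, 1}`. Such a matrix is orthogonal as soon as each row and each column contains exactly
one `1`, since it is then a permutation matrix (`indicator_mul_transpose`). Write `P16 (a,b) (c,e)`
for the entries of `P16`, and call `(a,b,c,e)` a point if this entry is `1`. The row and column
conditions for `P16`, its reshuffling and its partial transpose say that each of the six pairs of
coordinates takes each value in `Fin 4 × Fin 4` at exactly one point (the sixteen points form an
orthogonal array of strength two); this is a finite check on the table `sigma16`.
-/

open Matrix

/-- Flattening of `Fin 4 × Fin 4` to `Fin 16`, `(a,b) ↦ 4a + b`. -/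
def flat4 (p : Fin 4 × Fin 4) : Fin 16 :=
  ⟨4 * p.1.val + p.2.val, by have h1 := p.1.isLt; have h2 := p.2.isLt; omega⟩

/-- The column-to-row assignment of `P₁₆` in 1-based flat indexing. -/
def sigma16 : Fin 16 → ℕ := ![1, 16, 6, 11, 15, 2, 12, 5, 8, 9, 3, 14, 10, 7, 13, 4]

/-- The permutation matrix `P₁₆`: `(P₁₆) j k = 1` iff `j = σ(k)` (1-based flat indices). -/
def P16 : Matrix (Fin 4 × Fin 4) (Fin 4 × Fin 4) ℝ :=
  fun p q => if (flat4 p).val + 1 = sigma16 (flat4 q) then 1 else 0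

/-- A `0`-`1` matrix with exactly one `1` in each row and in each column is orthogonal. -/
lemma indicator_mul_transpose {m : Type*} [Fintype m] [DecidableEq m] (M : Matrix m m ℝ)
    (R : m → m → Prop) [∀ p q, Decidable (R p q)] (hM : ∀ p q, M p q = if R p q then 1 else 0)
    (hrow : ∀ p, ∃! q, R p q) (hcol : ∀ q, ∃! p, R p q) : M * Mᵀ = 1 := by
  choose f hf hfu using hrow
  have hR : ∀ p q, R p q ↔ q = f p := fun p q => ⟨hfu p q, fun h => h ▸ hf p⟩
  have hinj : Function.Injective f := fun p p' h =>
    (hcol (f p)).unique (hf p) ((hR p' (f p)).2 h)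
  ext p p'
  simp [Matrix.mul_apply, hM, hR, Matrix.one_apply, hinj.eq_iff, eq_comm]

/-- The permutation matrix `P₁₆` given by `σ = [1,16,6,11,15,2,12,5,8,9,3,14,10,7,13,4]`
is 2-unitary. -/
theorem P16_two_unitary :
    P16 * P16ᵀ = 1
    ∧ reshuffle P16 * (reshuffle P16)ᵀ = 1
    ∧ ptrans P16 * (ptrans P16)ᵀ = 1 := by
  refine ⟨indicator_mul_transpose _
      (fun p q => (flat4 p).val + 1 = sigma16 (flat4 q)) (fun _ _ => rfl) ?_ ?_,
    indicator_mul_transpose _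
      (fun p q => (flat4 (p.1, q.1)).val + 1 = sigma16 (flat4 (p.2, q.2))) (fun _ _ => rfl) ?_ ?_,
    indicator_mul_transpose _
      (fun p q => (flat4 (p.1, q.2)).val + 1 = sigma16 (flat4 (q.1, p.2))) (fun _ _ => rfl) ?_ ?_⟩ <;>
  unfold ExistsUnique <;> decide +kernel
end

section
/- Let ω = exp(2πi/3) and let B be the 9×9 complex matrix B j k = ω^(m j k), where the exponent table m (rows top to bottom, entries mod 3) is: row 1: (0,0,0,0,0,0,0,0,0); row 2: (0,0,0,1,1,1,2,2,2); row 3: (0,0,0,2,2,2,1,1,1); row 4: (0,1,2,0,1,2,0,1,2); row 5: (0,1,2,1,2,0,2,0,1); row 6: (0,1,2,2,0,1,1,2,0); row 7: (0,2,1,0,2,1,0,2,1); row 8: (0,2,1,1,0,2,2,1,0); row 9: (0,2,1,2,1,0,1,0,2). Then B is a self-R-dual Butson Hadamard matrix: every entry of B is a cube root of unity, B ⬝ Bᴴ = 9 • 1, B^R = B, and moreover the linear entropy of B^Γ vanishes, i.e. trace((B^Γ ⬝ (B^Γ)ᴴ)²) = (trace(B^Γ ⬝ (B^Γ)ᴴ))²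 = 81². -/
/-!
Writing `F x y = ω ^ (x y)` for the Fourier matrix of order 3, the exponent table is
`m ((a,b),(c,e)) = b c + a e` modulo 3, so `B ((a,b),(c,e)) = F b c * F a e`
(`Bmat_eq_fourier`). This expression is visibly invariant under exchanging `b` and `c`, which is
`B^R = B`, and orthogonality of the rows of `F` (`fourier3_orthogonal`) gives `B Bᴴ = 9 • 1`.
Exchanging `b` and `e` instead yields `B^Γ ((a,b),(c,e)) = u (a,b) * u (c,e)` with
`u (a,b) = F a b` (`ptrans_Bmat`), a matrix of rank one; since the entries of `u` are unimodular,
`B^Γ (B^Γ)ᴴ = 9 u uᴴ`, whose trace is 81 and whose square has trace `81²`.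
-/

open Matrix Complex

noncomputable section

/-- The exponent table of the self-R-dual Butson matrix `B ∈ BH(9,3)`. -/
def Bexp : Fin 9 → Fin 9 → ℕ :=
  ![![0,0,0,0,0,0,0,0,0],
    ![0,0,0,1,1,1,2,2,2],
    ![0,0,0,2,2,2,1,1,1],
    ![0,1,2,0,1,2,0,1,2],
    ![0,1,2,1,2,0,2,0,1],
    ![0,1,2,2,0,1,1,2,0],
    ![0,2,1,0,2,1,0,2,1],
    ![0,2,1,1,0,2,2,1,0],
    ![0,2,1,2,1,0,1,0,2]]

/-- `ω = exp(2πi/3)`. -/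
def omega3 : ℂ := Complex.exp (2 * Real.pi * Complex.I / 3)

/-- The Butson matrix `B`, `B j k = ω^(m j k)`. -/
def Bmat : Matrix (Fin 3 × Fin 3) (Fin 3 × Fin 3) ℂ :=
  fun p q => omega3 ^ Bexp (flat3 p) (flat3 q)

theorem omega3_isPrimitiveRoot : IsPrimitiveRoot omega3 3 := by
  simpa [omega3] using Complex.isPrimitiveRoot_exp 3 (by norm_num)

theorem omega3_cube : omega3 ^ 3 = 1 := omega3_isPrimitiveRoot.pow_eq_one

theorem omega3_sum : 1 + omega3 + omega3 ^ 2 = 0 := by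
  simpa [Finset.sum_range_succ] using
    omega3_isPrimitiveRoot.geom_sum_eq_zero (by norm_num)

theorem star_omega3 : star omega3 = omega3 ^ 2 := by
  have h : omega3⁻¹ = star omega3 :=
    Complex.inv_eq_conj (Complex.norm_eq_one_of_pow_eq_one omega3_cube (by norm_num))
  rw [← h]
  exact inv_eq_of_mul_eq_one_right (by rw [← omega3_cube]; ring)

/-- The unnormalised Fourier matrix of order 3, `F x y = ω ^ (x y)`, with indices read as the
natural numbers 0, 1, 2. -/
def fourier3 (x y : Fin 3) : ℂ := omega3 ^ (x.val * y.val)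

theorem fourier3_orthogonal (x y : Fin 3) :
    ∑ c, fourier3 x c * star (fourier3 y c) = if x = y then 3 else 0 := by
  have h1 := omega3_cube
  have h2 := omega3_sum
  fin_cases x <;> fin_cases y <;>
    simp only [fourier3, star_pow, star_omega3, Fin.sum_univ_three] <;>
    simp <;> grind

theorem fourier3_unimodular (x y : Fin 3) : fourier3 x y * star (fourier3 x y) = 1 := by
  rw [fourier3, star_pow, star_omega3, ← mul_pow, ← pow_succ', omega3_cube, one_pow]

theorem Bexp_mod_three : ∀ a b c e : Fin 3,
    Bexp (flat3 (a, b)) (flat3 (c, e)) % 3 = (b.val * c.val + a.val * e.val) % 3 := by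
  decide

theorem Bmat_eq_fourier (p q : Fin 3 × Fin 3) :
    Bmat p q = fourier3 p.2 q.1 * fourier3 p.1 q.2 := by
  rw [fourier3, fourier3, ← pow_add, Bmat, pow_eq_pow_mod _ omega3_cube,
    Bexp_mod_three p.1 p.2 q.1 q.2, ← pow_eq_pow_mod _ omega3_cube]

/-- The vector `u (a,b) = F a b`, which spans the range of `B^Γ`. -/
def fourierVec (p : Fin 3 × Fin 3) : ℂ := fourier3 p.1 p.2

/-- `B^Γ` is the rank-one matrix `u uᵀ`. -/
theorem ptrans_Bmat : ptrans Bmat = vecMulVec fourierVec fourierVec := by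
  ext p q
  simp only [ptrans, Bmat_eq_fourier, vecMulVec_apply, fourierVec]
  -- `B ((a,e),(c,b)) = F e c * F a b`, and `F` is symmetric
  rw [mul_comm, fourier3, fourier3, fourier3, Nat.mul_comm q.2.val]

theorem fourierVec_dotProduct_star : fourierVec ⬝ᵥ star fourierVec = 9 := by
  simp only [dotProduct, fourierVec, Pi.star_apply, fourier3_unimodular]
  simp

theorem ptrans_gram : ptrans Bmat * (ptrans Bmat)ᴴ =
    (9 : ℂ) • vecMulVec fourierVec (star fourierVec) := by
  rw [ptrans_Bmat, conjTranspose_vecMulVec, vecMulVec_mul_vecMulVec,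
    fourierVec_dotProduct_star, vecMulVec_smul]

/-- `B` is a self-R-dual Butson Hadamard matrix: all entries are cube roots of unity,
`B Bᴴ = 9 • 1`, `B^R = B`, and the linear entropy of `B^Γ` vanishes, i.e.
`trace((B^Γ (B^Γ)ᴴ)²) = trace(B^Γ (B^Γ)ᴴ)² = 81²`. -/
theorem Bmat_self_R_dual :
    (∀ p q, (Bmat p q) ^ 3 = 1)
    ∧ Bmat * Bmatᴴ = (9 : ℂ) • 1
    ∧ reshuffle Bmat = Bmat
    ∧ Matrix.trace ((ptrans Bmat * (ptrans Bmat)ᴴ) * (ptrans Bmat * (ptrans Bmat)ᴴ))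
        = (Matrix.trace (ptrans Bmat * (ptrans Bmat)ᴴ)) ^ 2
    ∧ (Matrix.trace (ptrans Bmat * (ptrans Bmat)ᴴ)) ^ 2 = 81 ^ 2 := by
  refine ⟨fun p q => ?_, ?_, ?_, ?_, ?_⟩
  · rw [Bmat, ← pow_mul, mul_comm, pow_mul, omega3_cube, one_pow]
  · ext p q
    have h : (Bmat * Bmatᴴ) p q =
        (∑ c, fourier3 p.2 c * star (fourier3 q.2 c)) *
          ∑ e, fourier3 p.1 e * star (fourier3 q.1 e) := by
      rw [mul_apply, Fintype.sum_prod_type, Finset.sum_mul_sum]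
      refine Finset.sum_congr rfl fun c _ => Finset.sum_congr rfl fun e _ => ?_
      rw [conjTranspose_apply, Bmat_eq_fourier, Bmat_eq_fourier, star_mul']
      ring
    rw [h, fourier3_orthogonal, fourier3_orthogonal, Matrix.smul_apply, one_apply]
    by_cases h1 : p.1 = q.1 <;> by_cases h2 : p.2 = q.2 <;> simp [Prod.ext_iff, h1, h2]
    norm_num
  · ext p q
    simp only [reshuffle, Bmat_eq_fourier]
    rw [fourier3, Nat.mul_comm, ← fourier3]
  · rw [ptrans_gram, smul_mul_smul_comm, vecMulVec_mul_vecMulVec, dotProduct_comm,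
      fourierVec_dotProduct_star, vecMulVec_smul, trace_smul, trace_smul,
      trace_vecMulVec, fourierVec_dotProduct_star]
    norm_num
  · rw [ptrans_gram, trace_smul, trace_vecMulVec, fourierVec_dotProduct_star]
    norm_num
end
end

section
/- Let ω = exp(2πi/3), let B be the 9×9 matrix B j k = ω^(m j k) with exponent table m: row 1: (0,0,0,0,0,0,0,0,0); row 2: (0,0,0,1,1,1,2,2,2); row 3: (0,0,0,2,2,2,1,1,1); row 4: (0,1,2,0,1,2,0,1,2); row 5: (0,1,2,1,2,0,2,0,1); row 6: (0,1,2,2,0,1,1,2,0); row 7: (0,2,1,0,2,1,0,2,1); row 8: (0,2,1,1,0,2,2,1,0); row 9: (0,2,1,2,1,0,1,0,2), and let D be the diagonal matrix D = diag(ω⁰, ω⁰, ω⁰, ω⁰, ω⁴, ω², ω⁰, ω², ω⁴). Then C = D ⬝ B ⬝ Dᴴ is a 2-unitary Butson-type complex Hadamard matrix of order 9: every entry of C is a cube root of unity, C ⬝ Cᴴ = 9 • 1, C^R ⬝ (C^R)ᴴ = 9 • 1 and C^Γ ⬝ (C^Γ)ᴴ = 9 • 1. -/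
/-!
Identify `Fin 3` with `ℤ/3` and let `χ` be the standard additive character of `ℤ/3`, so that
`ω = χ 1`. The exponent table of `B` is the bilinear form `a e + b c` at `((a,b),(c,e))`, and the
exponents of `D` are the quadratic form `a b` modulo 3. Hence
`C ((a,b),(c,e)) = χ (a b + a e + b c - c e)` (`DBD_apply`), a cube root of unity.

After reshuffling or partially transposing, the exponent still has the shape
`u p + c * s p + e * t p + v q` with `p = (a,b)`, `q = (c,e)` and `p ↦ (s p, t p)` injective:
the pair `(s p, t p)` is `(b, a)` for `C`, `(a + b, a - b)` for `C^R` and `(-b, a)` for `C^Γ`.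
Any such matrix has pairwise orthogonal rows of norm squared `9` by orthogonality of characters
(`mul_conjTranspose_of_phase`).
-/

open Matrix Complex

noncomputable section

/-- The diagonal matrix `D = diag(ω⁰,ω⁰,ω⁰,ω⁰,ω⁴,ω²,ω⁰,ω²,ω⁴)`. -/
def Dmat : Matrix (Fin 3 × Fin 3) (Fin 3 × Fin 3) ℂ :=
  Matrix.diagonal (fun p => omega3 ^ (![0,0,0,0,4,2,0,2,4] : Fin 9 → ℕ) (flat3 p))

/-- Orthogonality of rows whose phases depend on the column through an additive term `v q` common
to all rows and a linear form determined injectively by the row. -/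
lemma mul_conjTranspose_of_phase (M : Matrix (ZMod 3 × ZMod 3) (ZMod 3 × ZMod 3) ℂ)
    (u s t v : ZMod 3 × ZMod 3 → ZMod 3)
    (hinj : ∀ p q, s p - s q = 0 → t p - t q = 0 → p = q)
    (hM : ∀ p q, M p q = ZMod.stdAddChar (u p + q.1 * s p + q.2 * t p + v q)) :
    M * Mᴴ = (9 : ℂ) • 1 := by
  have hprim := ZMod.isPrimitive_stdAddChar 3
  ext p p'
  have key : ∀ q : ZMod 3 × ZMod 3, M p q * star (M p' q) =
      ZMod.stdAddChar (u p - u p') * (ZMod.stdAddChar (q.1 * (s p - s p')) *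
        ZMod.stdAddChar (q.2 * (t p - t p'))) := by
    intro q
    rw [hM, hM, ← starRingEnd_apply, ← AddChar.map_neg_eq_conj, ← AddChar.map_add_eq_mul,
      ← AddChar.map_add_eq_mul, ← AddChar.map_add_eq_mul]
    congr 1
    ring
  simp only [Matrix.mul_apply, Matrix.conjTranspose_apply, key, ← Finset.mul_sum,
    Fintype.sum_prod_type, ← Finset.sum_mul, AddChar.sum_mulShift _ hprim, Matrix.smul_apply,
    Matrix.one_apply]
  by_cases h : p = p'
  · subst h
    norm_num [ZMod.card]
  · have : ¬ (s p - s p' = 0 ∧ t p - t p' = 0) := fun hh => h (hinj _ _ hh.1 hh.2)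
    by_cases h1 : s p - s p' = 0
    · have h2 : t p - t p' ≠ 0 := fun h2 => this ⟨h1, h2⟩
      simp [h, h2]
    · simp [h, h1]

lemma omega3_pow (n : ℕ) : omega3 ^ n = ZMod.stdAddChar (n : ZMod 3) := by
  have h := ZMod.stdAddChar_coe (N := 3) (n : ℤ)
  rw [Int.cast_natCast] at h
  rw [h, omega3, ← Complex.exp_nat_mul]
  congr 1
  push_cast
  ring

lemma DBD_apply_pow (p q : Fin 3 × Fin 3) :
    (Dmat * Bmat * Dmatᴴ) p q =
      omega3 ^ (![0,0,0,0,4,2,0,2,4] : Fin 9 → ℕ) (flat3 p) * omega3 ^ Bexp (flat3 p) (flat3 q) *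
        star (omega3 ^ (![0,0,0,0,4,2,0,2,4] : Fin 9 → ℕ) (flat3 q)) := by
  rw [Dmat, Matrix.diagonal_conjTranspose, Matrix.mul_diagonal, Matrix.diagonal_mul]
  rfl

/-- The exponent table of `D` (entries `0, 2, 4`) and that of `B` are, modulo 3, the forms `a b`
and `a e + b c`; together they give a single quadratic phase. -/
lemma DBD_apply (p q : ZMod 3 × ZMod 3) :
    (Dmat * Bmat * Dmatᴴ : Matrix (Fin 3 × Fin 3) (Fin 3 × Fin 3) ℂ) p q =
      ZMod.stdAddChar (p.1 * p.2 + p.1 * q.2 + p.2 * q.1 - q.1 * q.2) := by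
  have hexp : ∀ p q : ZMod 3 × ZMod 3,
      (((![0,0,0,0,4,2,0,2,4] : Fin 9 → ℕ) (flat3 p) : ℕ) : ZMod 3)
        + ((Bexp (flat3 p) (flat3 q) : ℕ) : ZMod 3)
        + -(((![0,0,0,0,4,2,0,2,4] : Fin 9 → ℕ) (flat3 q) : ℕ) : ZMod 3)
      = p.1 * p.2 + p.1 * q.2 + p.2 * q.1 - q.1 * q.2 := by
    decide
  rw [← hexp, AddChar.map_add_eq_mul, AddChar.map_add_eq_mul, AddChar.map_neg_eq_conj,
    ← omega3_pow, ← omega3_pow, ← omega3_pow]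
  exact DBD_apply_pow p q

/-- `C = D B Dᴴ` is a 2-unitary Butson-type complex Hadamard matrix of order 9. -/
theorem DBD_two_unitary :
    let C := Dmat * Bmat * Dmatᴴ
    (∀ p q, (C p q) ^ 3 = 1)
    ∧ C * Cᴴ = (9 : ℂ) • 1
    ∧ reshuffle C * (reshuffle C)ᴴ = (9 : ℂ) • 1
    ∧ ptrans C * (ptrans C)ᴴ = (9 : ℂ) • 1 := by
  intro C
  refine ⟨fun p q => ?_, ?_, ?_, ?_⟩
  · refine (congrArg (· ^ 3) (DBD_apply p q)).trans ?_
    have h3 : ∀ x : ZMod 3, 3 • x = 0 := by decide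
    simp only [← AddChar.map_nsmul_eq_pow, h3, AddChar.map_zero_eq_one]
  · refine mul_conjTranspose_of_phase C (fun p => p.1 * p.2) (fun p => p.2) (fun p => p.1)
      (fun q => -(q.1 * q.2)) (by decide) fun p q => (DBD_apply p q).trans ?_
    congr 1
    ring
  · refine mul_conjTranspose_of_phase (reshuffle C) (fun _ => 0) (fun p => p.1 + p.2)
      (fun p => p.1 - p.2) (fun _ => 0) (by decide)
      fun p q => (DBD_apply (p.1, q.1) (p.2, q.2)).trans ?_
    congr 1
    ring
  · refine mul_conjTranspose_of_phase (ptrans C) (fun p => p.1 * p.2) (fun p => -p.2)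
      (fun p => p.1) (fun q => q.1 * q.2) (by decide)
      fun p q => (DBD_apply (p.1, q.2) (q.1, p.2)).trans ?_
    congr 1
    ring
end
end

section
/- The quantized cat map matrix G₉(−4, −8, −4), defined by G j k = exp((iπ/9)(−4j² − 8k² − 4jk)) for j, k ∈ {1, …, 9}, is a 2-unitary Butson-type complex Hadamard matrix: every entry of G is a 9-th root of unity, G ⬝ Gᴴ = 9 • 1, G^R ⬝ (G^R)ᴴ = 9 • 1 and G^Γ ⬝ (G^Γ)ᴴ = 9 • 1. -/
/-!
Every entry of `G = G₉(−4,−8,−4)` is `χ (−2j² − 4k² − 2jk)`, where `χ x = exp (2πi x / 9)` is the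
standard additive character of `ZMod 9`. Hence the inner product of two distinct rows of `G`, `G^R`
or `G^Γ` is `∑ χ` over the nine differences of the exponents in these rows, and it vanishes as soon
as the multiset of differences is invariant under translation by `3`, since `χ 3 ≠ 1`
(`sum_stdAddChar_eq_zero`, `mul_conjTranspose_of_balanced`).

The invariance holds for the following reasons, and is verified by finite computation.
* For `G`, rows `j` and `j'` differ by `2(j' − j)k` plus a constant; as `k` runs over `ZMod 9` this
  covers a coset of a nontrivial subgroup uniformly, and every such subgroup contains `3`.
* For `G^R`, if the row indices differ by `(α, β)`, the difference at column `(c, e)` is, up to a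
  constant and a sign, `3((α + 2β)c + 2(α + β)e)`, and the coefficients of this linear form do not
  both vanish modulo 3 unless `α = β = 0`.
* For `G^Γ`, the difference is likewise `6βc + (3α + 2β)e`: if `β ≠ 0`, varying `c` alone runs
  through a coset of `{0, 3, 6}`, and if `β = 0`, varying `e` does.
-/

open Matrix Complex

noncomputable section

/-- The quantized cat map `G₉(−4,−8,−4)`:
`G j k = exp((iπ/9)(−4j² − 8k² − 4jk))` for `j,k ∈ {1,…,9}`. -/
def G9cat : Matrix (Fin 3 × Fin 3) (Fin 3 × Fin 3) ℂ :=
  fun p q =>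
    Complex.exp ((Real.pi : ℂ) * Complex.I / 9 *
      (-4 * ((flat3 p).val + 1 : ℂ) ^ 2 - 8 * ((flat3 q).val + 1 : ℂ) ^ 2
        - 4 * ((flat3 p).val + 1 : ℂ) * ((flat3 q).val + 1 : ℂ)))

/-- The exponent matrix of `G9cat`: `G j k = χ (−2j² − 4k² − 2jk)` for the standard additive
character `χ` of `ZMod 9`, with `j, k` numbered from `1`. -/
def G9exponent : Matrix (Fin 3 × Fin 3) (Fin 3 × Fin 3) (ZMod 9) :=
  fun p q =>
    -2 * ((flat3 p).val + 1) ^ 2 - 4 * ((flat3 q).val + 1) ^ 2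
      - 2 * ((flat3 p).val + 1) * ((flat3 q).val + 1)

theorem G9cat_eq_map : G9cat = G9exponent.map ZMod.stdAddChar := by
  ext p q
  have h := ZMod.stdAddChar_coe (N := 9)
    (-2 * ((flat3 p).val + 1) ^ 2 - 4 * ((flat3 q).val + 1) ^ 2
      - 2 * ((flat3 p).val + 1) * ((flat3 q).val + 1) : ℤ)
  push_cast at h
  rw [Matrix.map_apply, G9exponent, h, G9cat]
  congr 1
  ring

theorem stdAddChar_three_ne_one : ZMod.stdAddChar (3 : ZMod 9) ≠ 1 := by
  rw [← AddChar.map_zero_eq_one (ZMod.stdAddChar (N := 9))]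
  exact fun h => absurd (ZMod.injective_stdAddChar h) (by decide)

/-- A family in `ZMod 9` is balanced if its multiset of values is invariant under translation
by `3`, that is, `v` and `v + 3` are attained equally often. -/
abbrev ThreeBalanced {ι : Type*} [Fintype ι] (f : ι → ZMod 9) : Prop :=
  ∀ v, Fintype.card {r // f r = v} = Fintype.card {r // f r = v + 3}

theorem sum_stdAddChar_eq_zero {ι : Type*} [Fintype ι] {f : ι → ZMod 9} (hf : ThreeBalanced f) :
    ∑ r, ZMod.stdAddChar (f r) = 0 := by
  have fiber : ∑ r, ZMod.stdAddChar (f r)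
      = ∑ v, (Fintype.card {r // f r = v} : ℂ) * ZMod.stdAddChar v := by
    rw [← Finset.sum_fiberwise Finset.univ f]
    refine Finset.sum_congr rfl fun v _ => ?_
    rw [Finset.sum_congr rfl (g := fun _ => ZMod.stdAddChar v)
      fun r hr => by rw [(Finset.mem_filter.1 hr).2], Finset.sum_const, nsmul_eq_mul,
      Fintype.card_subtype]
  -- Reindexing `v ↦ v + 3` shows that the sum is fixed under multiplication by `χ 3 ≠ 1`.
  have shift : (∑ r, ZMod.stdAddChar (f r)) * ZMod.stdAddChar (3 : ZMod 9)
      = ∑ r, ZMod.stdAddChar (f r) := by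
    rw [fiber, Finset.sum_mul, ← Equiv.sum_comp (Equiv.addRight (3 : ZMod 9))
      (fun v => (Fintype.card {r // f r = v} : ℂ) * ZMod.stdAddChar v)]
    refine Finset.sum_congr rfl fun v _ => ?_
    rw [Equiv.coe_addRight, AddChar.map_add_eq_mul, ← hf v, mul_assoc]
  by_contra h
  exact stdAddChar_three_ne_one (mul_left_cancel₀ h (shift.trans (mul_one _).symm))

theorem mul_conjTranspose_of_balanced {E : Matrix (Fin 3 × Fin 3) (Fin 3 × Fin 3) (ZMod 9)}
    (hE : ∀ p q, p ≠ q → ThreeBalanced fun r => E p r - E q r) :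
    E.map ZMod.stdAddChar * (E.map ZMod.stdAddChar)ᴴ = (9 : ℂ) • 1 := by
  ext p q
  have inner_eq : (E.map ZMod.stdAddChar * (E.map ZMod.stdAddChar)ᴴ) p q
      = ∑ r, ZMod.stdAddChar (E p r - E q r) := by
    simp only [Matrix.mul_apply, Matrix.conjTranspose_apply, Matrix.map_apply, sub_eq_add_neg,
      AddChar.map_add_eq_mul, AddChar.map_neg_eq_conj]
    rfl
  rw [inner_eq]
  obtain rfl | hpq := eq_or_ne p q
  · simp
  · rw [sum_stdAddChar_eq_zero (hE p q hpq)]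
    simp [hpq]

/-- `G₉(−4,−8,−4)` is a 2-unitary Butson-type complex Hadamard matrix: all entries are
9-th roots of unity and `G`, `G^R`, `G^Γ` are all unitary up to the factor 9. -/
theorem G9cat_two_unitary_butson :
    (∀ p q, (G9cat p q) ^ 9 = 1)
    ∧ G9cat * G9catᴴ = (9 : ℂ) • 1
    ∧ reshuffle G9cat * (reshuffle G9cat)ᴴ = (9 : ℂ) • 1
    ∧ ptrans G9cat * (ptrans G9cat)ᴴ = (9 : ℂ) • 1 := by
  rw [G9cat_eq_map]
  refine ⟨fun p q => ?_, mul_conjTranspose_of_balanced (by decide +kernel),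
    mul_conjTranspose_of_balanced (E := reshuffle G9exponent) (by decide +kernel),
    mul_conjTranspose_of_balanced (E := ptrans G9exponent) (by decide +kernel)⟩
  rw [Matrix.map_apply, ← AddChar.map_nsmul_eq_pow, nsmul_eq_mul,
    show ((9 : ℕ) : ZMod 9) = 0 from rfl, zero_mul, AddChar.map_zero_eq_one]
end
end
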